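/- Let V be a finite set, 𝒞 a finite collection of subsets c ⊆ V, each with a weight w_c ≥ 0, and let cut_G(S) = Σ_{c∈𝒞} w_c·|S ∩ c|·|c ∖ S| be the associated co-occurrence cut function. There is an absolute constant C > 0 such that for every ε ∈ (0,1), setting F(ε) = ε^{−1/2}·(1 + log₂(1 + log₂(1/ε))), there exist a finite auxiliary node set A with |A| ≤ C·|𝒞|·F(ε) and a weight function ŵ : (V ∪ A) × (V ∪ A) → ℝ≥0 with at most C·F(ε)·Σ_{c∈𝒞}|c| nonzero values, such that for every S ⊆ V, cut_G(S) ≤ min_{T ⊆ A} dircut_ŵ(S ∪ T) ≤ (1+ε)·cut_G(S). -/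

import Mathlib

/-- Directed cut value of a weighted directed graph on a finite node set. -/
noncomputable def dirCut {N : Type*} [Fintype N] [DecidableEq N]
    (W : N → N → ℝ) (U : Finset N) : ℝ :=
  ∑ u ∈ U, ∑ v ∈ Uᶜ, W u v

open Finset in
theorem aux_telescope (t : ℕ → ℝ) (hm : Monotone t) (h0 : t 0 = 0) (N : ℕ) (h1 : t (N+1) = 1)
    (x : ℝ) (i : ℕ) (hi : i ≤ N) (hl : t i ≤ x) (hr : x ≤ t (i+1)) :
    ∑ j ∈ range N, (t (j+2) - t j) * min (x * (1 - t (j+1))) ((1-x) * t (j+1))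
      = x * (1-x) - (x - t i) * (t (i+1) - x) := by
  have A : ∀ M, M ≤ i →
      ∑ j ∈ range M, (t (j+2) - t j) * min (x * (1 - t (j+1))) ((1-x) * t (j+1))
        = (1-x) * (t M * t (M+1)) := by
    intro M
    induction M with
    | zero => intro _; simp [h0]
    | succ M ih =>
      intro hM
      rw [sum_range_succ, ih (by omega)]
      have : t (M+1) ≤ x := (hm hM).trans hl
      rw [min_eq_right (by nlinarith)]
      ring
  have B : ∀ M, i ≤ M →
      ∑ j ∈ range M, (t (j+2) - t j) * min (x * (1 - t (j+1))) ((1-x) * t (j+1))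
        = (1-x) * (t i * t (i+1)) + x * ((1 - t i) * (1 - t (i+1)) - (1 - t M) * (1 - t (M+1))) := by
    intro M hM
    induction M, hM using Nat.le_induction with
    | base => rw [A i le_rfl]; ring
    | succ M hM ih =>
      rw [sum_range_succ, ih]
      have : x ≤ t (M+1) := hr.trans (hm (by omega))
      rw [min_eq_left (by nlinarith)]
      ring
  rw [B N hi, h1]; ring

theorem aux_exists (t : ℕ → ℝ) (h0 : t 0 = 0) (N : ℕ) (h1 : t (N+1) = 1)
    (x : ℝ) (hx0 : 0 ≤ x) (hx1 : x ≤ 1) : ∃ i, i ≤ N ∧ t i ≤ x ∧ x ≤ t (i+1) := by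
  by_contra! h
  have : ∀ i, i ≤ N + 1 → t i ≤ x := by
    intro i
    induction i with
    | zero => intro _; rw [h0]; exact hx0
    | succ i ih =>
      intro hi
      exact (h i (by omega) (ih (by omega))).le
  have h2 := h N le_rfl (this N (by omega))
  linarith

/-- The breakpoints. -/
noncomputable def tpt (N : ℕ) (j : ℕ) : ℝ :=
  (j:ℝ)^2 / ((j:ℝ)^2 + (((N + 1 - j : ℕ)) : ℝ)^2)

theorem tpt_den (N j : ℕ) : 0 < (j:ℝ)^2 + (((N + 1 - j : ℕ)) : ℝ)^2 := by
  rcases Nat.eq_zero_or_pos j with h | h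
  · subst h; simp; positivity
  · positivity

theorem tpt_mono (N : ℕ) : Monotone (tpt N) := by
  intro j k hjk
  unfold tpt
  rw [div_le_div_iff₀ (tpt_den N j) (tpt_den N k)]
  have h1 : (j:ℝ)^2 ≤ (k:ℝ)^2 := by gcongr
  have h2 : (((N + 1 - k : ℕ)) : ℝ)^2 ≤ (((N + 1 - j : ℕ)) : ℝ)^2 := by gcongr
  have := mul_le_mul h1 h2 (by positivity) (by positivity)
  nlinarith

theorem tpt_zero (N : ℕ) : tpt N 0 = 0 := by simp [tpt]

theorem tpt_last (N : ℕ) : tpt N (N+1) = 1 := by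
  have : ((N:ℝ)+1)^2 ≠ 0 := by positivity
  simp [tpt, this]

theorem tpt_nonneg (N j : ℕ) : 0 ≤ tpt N j := by unfold tpt; positivity

theorem tpt_le_one (N j : ℕ) : tpt N j ≤ 1 := by
  unfold tpt
  rw [div_le_one (tpt_den N j)]
  have := sq_nonneg (((N + 1 - j : ℕ)) : ℝ)
  linarith

theorem tpt_gap (N i : ℕ) (hi : i ≤ N) (x : ℝ) (hx0 : 0 ≤ x) (hx1 : x ≤ 1) :
    (x - tpt N i) * (tpt N (i+1) - x) * (N+1)^2 ≤ 4 * (x * (1-x)) := by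
  have hP := tpt_den N i
  have hP' := tpt_den N (i+1)
  have e1 : tpt N i * ((i:ℝ)^2 + (((N + 1 - i : ℕ)) : ℝ)^2) = (i:ℝ)^2 :=
    div_mul_cancel₀ _ hP.ne'
  have e2 : tpt N (i+1) * (((i+1:ℕ):ℝ)^2 + (((N + 1 - (i+1) : ℕ)) : ℝ)^2) = ((i+1:ℕ):ℝ)^2 :=
    div_mul_cancel₀ _ hP'.ne'
  obtain ⟨r, rfl⟩ := Nat.exists_eq_add_of_le hi
  have q1 : i + r + 1 - i = r + 1 := by omega
  have q2 : i + r + 1 - (i + 1) = r := by omega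
  rw [q1] at hP e1
  rw [q2] at hP' e2
  generalize tpt (i+r) i = t at *
  generalize tpt (i+r) (i+1) = t' at *
  push_cast at *
  have hp0 : (0:ℝ) ≤ i := Nat.cast_nonneg i
  have hq0 : (0:ℝ) ≤ r := Nat.cast_nonneg r
  generalize (i:ℝ) = p at *
  generalize (r:ℝ) = q at *
  have key : (x - t) * (t' - x) * ((p^2 + (q+1)^2) * ((p+1)^2 + q^2))
      = x * (1-x) * (p+q+1)^2 - (x * (q+1) * q - (1-x) * p * (p+1))^2 := by
    have : (x - t) * (t' - x) * ((p^2 + (q+1)^2) * ((p+1)^2 + q^2))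
      = (x * (p^2 + (q+1)^2) - p^2) * ((p+1)^2 - x * ((p+1)^2 + q^2)) := by
      have h3 : x * (p^2 + (q+1)^2) - p^2 = (x - t) * (p^2 + (q+1)^2) := by
        rw [sub_mul, e1]
      have h4 : (p+1)^2 - x * ((p+1)^2 + q^2) = (t' - x) * ((p+1)^2 + q^2) := by
        rw [sub_mul, e2]
      rw [h3, h4]; ring
    rw [this]; ring
  have hX : 0 ≤ x * (1-x) := mul_nonneg hx0 (by linarith)
  rcases le_total ((x - t) * (t' - x)) 0 with hD | hD
  · have : (x - t) * (t' - x) * (p+q+1)^2 ≤ 0 := mul_nonpos_of_nonpos_of_nonneg hD (sq_nonneg _)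
    linarith
  have hb1 : (p+q+1)^2 ≤ 2 * (p^2 + (q+1)^2) := by nlinarith [sq_nonneg (p - (q+1))]
  have hb2 : (p+q+1)^2 ≤ 2 * ((p+1)^2 + q^2) := by nlinarith [sq_nonneg (p + 1 - q)]
  have hb := mul_le_mul hb1 hb2 (sq_nonneg _) (by positivity)
  have hb' := mul_le_mul_of_nonneg_left hb hD
  have hn : 0 < (p+q+1)^2 := by
    have : 0 < p + q + 1 := by linarith
    positivity
  refine le_of_mul_le_mul_right ?_ hn
  have hs := sq_nonneg (x * (q+1) * q - (1-x) * p * (p+1))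
  have e5 : (x - t) * (t' - x) * (2 * (p^2 + (q+1)^2) * (2 * ((p+1)^2 + q^2)))
      = 4 * ((x - t) * (t' - x) * ((p^2 + (q+1)^2) * ((p+1)^2 + q^2))) := by ring
  rw [e5, key] at hb'
  rw [mul_assoc]
  linarith

theorem approx_main (N : ℕ) (ε : ℝ) (he : 0 < ε) (he1 : ε < 1) (hN : 9 / ε ≤ (N+1:ℝ)^2)
    (x : ℝ) (hx0 : 0 ≤ x) (hx1 : x ≤ 1) :
    x * (1-x) ≤ (1+ε) * ∑ j ∈ Finset.range N, (tpt N (j+2) - tpt N j) *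
        min (x * (1 - tpt N (j+1))) ((1-x) * tpt N (j+1)) ∧
    ∑ j ∈ Finset.range N, (tpt N (j+2) - tpt N j) *
        min (x * (1 - tpt N (j+1))) ((1-x) * tpt N (j+1)) ≤ x * (1-x) := by
  obtain ⟨i, hi, hl, hr⟩ := aux_exists (tpt N) (tpt_zero N) N (tpt_last N) x hx0 hx1
  rw [aux_telescope (tpt N) (tpt_mono N) (tpt_zero N) N (tpt_last N) x i hi hl hr]
  have hg := tpt_gap N i hi x hx0 hx1
  have hD : 0 ≤ (x - tpt N i) * (tpt N (i+1) - x) := mul_nonneg (by linarith) (by linarith)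
  generalize (x - tpt N i) * (tpt N (i+1) - x) = D at *
  have hx : 0 ≤ x * (1-x) := mul_nonneg hx0 (by linarith)
  generalize x * (1-x) = X at *
  rw [div_le_iff₀ he] at hN
  have h1 : D * 9 ≤ 4 * X * ε := by
    calc D * 9 ≤ D * ((N+1:ℝ)^2 * ε) := by gcongr
      _ = D * (N+1:ℝ)^2 * ε := by ring
      _ ≤ _ := by gcongr
  constructor
  · nlinarith
  · linarith

/-- Bipartite gadget weights. -/
def gadW {V : Type} [DecidableEq V] {m : ℕ} (c : Fin m → Finset V) (a b : Fin m → ℝ) :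
    V ⊕ Fin m → V ⊕ Fin m → ℝ
  | Sum.inl v, Sum.inr e => if v ∈ c e then a e else 0
  | Sum.inr e, Sum.inl v => if v ∈ c e then b e else 0
  | _, _ => 0

theorem gad_dirCut {V : Type} [Fintype V] [DecidableEq V] {m : ℕ} (c : Fin m → Finset V)
    (a b : Fin m → ℝ) (S : Finset V) (T : Finset (Fin m)) :
    dirCut (gadW c a b) (S.image Sum.inl ∪ T.image Sum.inr)
      = ∑ e, if e ∈ T then ((c e \ S).card : ℝ) * b e else ((S ∩ c e).card : ℝ) * a e := by
  have h1 : ∀ (U : Finset (V ⊕ Fin m)) (W : V ⊕ Fin m → V ⊕ Fin m → ℝ),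
      dirCut W U = ∑ u, ∑ v, if u ∈ U then (if v ∈ U then 0 else W u v) else 0 := by
    intro U W
    unfold dirCut
    rw [← Finset.sum_filter_add_sum_filter_not Finset.univ (· ∈ U)]
    rw [Finset.sum_eq_zero (s := Finset.univ.filter (¬ · ∈ U))]
    · rw [add_zero]
      simp only [Finset.filter_mem_eq_inter, Finset.univ_inter]
      refine Finset.sum_congr rfl fun u hu => ?_
      simp only [hu, if_true]
      rw [← Finset.sum_filter_add_sum_filter_not Finset.univ (· ∈ U)]
      rw [Finset.sum_eq_zero (s := Finset.univ.filter (· ∈ U)), zero_add]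
      · refine Finset.sum_congr (by ext; simp) fun v hv => ?_
        simp at hv; simp [hv]
      · intro v hv; simp at hv; simp [hv]
    · intro u hu; simp at hu; simp [hu]
  rw [h1]
  simp only [Fintype.sum_sum_type, gadW]
  simp only [Finset.mem_union, Finset.mem_image, Sum.inl.injEq, Sum.inr.injEq, reduceCtorEq,
    and_false, exists_false, exists_eq_right, or_false, false_or, ite_self, Finset.sum_const_zero,
    zero_add, add_zero]
  rw [Finset.sum_comm, ← Finset.sum_add_distrib]
  refine Finset.sum_congr rfl fun e _ => ?_
  by_cases he : e ∈ T
  · simp only [he, if_true, ite_self, Finset.sum_const_zero, zero_add]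
    rw [← nsmul_eq_mul, ← Finset.sum_const, ← Finset.sum_filter_add_sum_filter_not Finset.univ (· ∈ c e \ S)]
    rw [Finset.sum_eq_zero (s := Finset.univ.filter (¬ · ∈ c e \ S)), add_zero]
    · refine Finset.sum_congr (by ext; simp) fun v hv => ?_
      simp at hv; simp [hv]
    · intro v hv; simp at hv; by_cases h : v ∈ S <;> simp [h]; intro h'; exact absurd (hv h') h
  · simp only [he, if_false, Finset.sum_const_zero, add_zero]
    rw [← nsmul_eq_mul, ← Finset.sum_const, ← Finset.sum_filter_add_sum_filter_not Finset.univ (· ∈ S ∩ c e)]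
    rw [Finset.sum_eq_zero (s := Finset.univ.filter (¬ · ∈ S ∩ c e)), add_zero]
    · refine Finset.sum_congr (by ext; simp) fun v hv => ?_
      simp at hv; simp [hv]
    · intro v hv; simp at hv; by_cases h : v ∈ S <;> simp [h]; intro h'; exact absurd h' (hv h)

theorem gad_iInf {V : Type} [Fintype V] [DecidableEq V] {m : ℕ} (c : Fin m → Finset V)
    (a b : Fin m → ℝ) (S : Finset V) :
    (⨅ T : Finset (Fin m), dirCut (gadW c a b) (S.image Sum.inl ∪ T.image Sum.inr))
      = ∑ e, min (((S ∩ c e).card : ℝ) * a e) (((c e \ S).card : ℝ) * b e) := by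
  apply le_antisymm
  · refine (ciInf_le (Set.finite_range _).bddBelow
      (Finset.univ.filter fun e => ((c e \ S).card : ℝ) * b e ≤ ((S ∩ c e).card : ℝ) * a e)).trans ?_
    rw [gad_dirCut]
    refine Finset.sum_le_sum fun e _ => ?_
    simp only [Finset.mem_filter, Finset.mem_univ, true_and]
    split_ifs with h
    · exact le_min h le_rfl
    · exact le_min le_rfl (not_le.mp h).le
  · refine le_ciInf fun T => ?_
    rw [gad_dirCut]
    refine Finset.sum_le_sum fun e _ => ?_
    split_ifs with h
    · exact min_le_right _ _
    · exact min_le_left _ _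

theorem gad_ncard {V : Type} [Fintype V] [DecidableEq V] {m : ℕ} (c : Fin m → Finset V)
    (a b : Fin m → ℝ) :
    {p : (V ⊕ Fin m) × (V ⊕ Fin m) | gadW c a b p.1 p.2 ≠ 0}.ncard ≤ 2 * ∑ e, (c e).card := by
  classical
  let E : Finset ((_ : Fin m) × V) := Finset.univ.sigma c
  have hE : E.card = ∑ e, (c e).card := Finset.card_sigma _ _
  let F : Finset ((V ⊕ Fin m) × (V ⊕ Fin m)) :=
    E.image (fun p => (Sum.inl p.2, Sum.inr p.1)) ∪ E.image (fun p => (Sum.inr p.1, Sum.inl p.2))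
  have hF : F.card ≤ 2 * ∑ e, (c e).card := by
    refine (Finset.card_union_le _ _).trans ?_
    have := Finset.card_image_le (s := E) (f := fun p => ((Sum.inl p.2, Sum.inr p.1) : (V ⊕ Fin m) × (V ⊕ Fin m)))
    have := Finset.card_image_le (s := E) (f := fun p => ((Sum.inr p.1, Sum.inl p.2) : (V ⊕ Fin m) × (V ⊕ Fin m)))
    omega
  refine le_trans ?_ hF
  rw [← Set.ncard_coe_finset F]
  refine Set.ncard_le_ncard ?_ (Finset.finite_toSet F)
  rintro ⟨u | e, v | f⟩ h
  · simp [gadW] at h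
  · simp [gadW] at h; simp [F, E, h]
  · simp [gadW] at h; simp [F, E, h]
  · simp [gadW] at h

theorem one_set_aux (N : ℕ) (ε : ℝ) (he : 0 < ε) (he1 : ε < 1) (hN : 9 / ε ≤ (N+1:ℝ)^2)
    (w s r : ℝ) (hw : 0 ≤ w) (hs : 0 ≤ s) (hr : 0 ≤ r) :
    w * s * r ≤ ∑ j : Fin N, min (s * ((1+ε) * w * (s+r) * (tpt N (j+2) - tpt N j) * (1 - tpt N (j+1))))
        (r * ((1+ε) * w * (s+r) * (tpt N (j+2) - tpt N j) * tpt N (j+1))) ∧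
    ∑ j : Fin N, min (s * ((1+ε) * w * (s+r) * (tpt N (j+2) - tpt N j) * (1 - tpt N (j+1))))
        (r * ((1+ε) * w * (s+r) * (tpt N (j+2) - tpt N j) * tpt N (j+1))) ≤ (1+ε) * (w * s * r) := by
  rcases (add_nonneg hs hr).eq_or_lt with h0 | hk
  · have : s = 0 := by linarith
    have : r = 0 := by linarith
    subst_vars; simp
  obtain ⟨h1, h2⟩ := approx_main N ε he he1 hN (s/(s+r)) (by positivity)
    (by rw [div_le_one hk]; linarith)
  have hy : 1 - s/(s+r) = r/(s+r) := by field_simp; ring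
  rw [hy] at h1 h2
  have e : ∑ j : Fin N, min (s * ((1+ε) * w * (s+r) * (tpt N (j+2) - tpt N j) * (1 - tpt N (j+1))))
        (r * ((1+ε) * w * (s+r) * (tpt N (j+2) - tpt N j) * tpt N (j+1)))
      = (1+ε) * w * (s+r)^2 * ∑ j ∈ Finset.range N, (tpt N (j+2) - tpt N j) *
        min (s/(s+r) * (1 - tpt N (j+1))) (r/(s+r) * tpt N (j+1)) := by
    rw [Finset.sum_range, Finset.mul_sum]
    refine Finset.sum_congr rfl fun j _ => ?_
    have hd : 0 ≤ tpt N (j+2) - tpt N j := sub_nonneg.mpr (tpt_mono N (by omega))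
    have hK : 0 ≤ (1+ε) * w * (s+r)^2 * (tpt N (j+2) - tpt N j) := by positivity
    rw [← mul_assoc ((1+ε) * w * (s+r)^2), mul_min_of_nonneg _ _ hK]
    congr 1 <;> field_simp
  rw [e]
  have hX : w * s * r = w * (s+r)^2 * (s/(s+r) * (r/(s+r))) := by field_simp
  rw [hX]
  generalize s/(s+r) * (r/(s+r)) = X at *
  generalize ∑ j ∈ Finset.range N, (tpt N (j+2) - tpt N j) *
        min (s/(s+r) * (1 - tpt N (j+1))) (r/(s+r) * tpt N (j+1)) = Y at *
  have hc : 0 ≤ w * (s+r)^2 := by positivity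
  constructor
  · calc _ ≤ w * (s+r)^2 * ((1+ε) * Y) := by gcongr
      _ = _ := by ring
  · calc _ = (1+ε) * (w * (s+r)^2 * Y) := by ring
      _ ≤ _ := by gcongr

theorem one_set (N : ℕ) (ε : ℝ) (he : 0 < ε) (he1 : ε < 1) (hN : 9 / ε ≤ (N+1:ℝ)^2)
    (w s r k : ℝ) (hw : 0 ≤ w) (hs : 0 ≤ s) (hr : 0 ≤ r) (hk : s + r = k) :
    w * s * r ≤ ∑ j : Fin N, min (s * ((1+ε) * w * k * (tpt N (j+2) - tpt N j) * (1 - tpt N (j+1))))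
        (r * ((1+ε) * w * k * (tpt N (j+2) - tpt N j) * tpt N (j+1))) ∧
    ∑ j : Fin N, min (s * ((1+ε) * w * k * (tpt N (j+2) - tpt N j) * (1 - tpt N (j+1))))
        (r * ((1+ε) * w * k * (tpt N (j+2) - tpt N j) * tpt N (j+1))) ≤ (1+ε) * (w * s * r) := by
  subst hk
  exact one_set_aux N ε he he1 hN w s r hw hs hr

set_option maxHeartbeats 1000000 in
/-- **Augmented cut sparsifiers for co-occurrence graphs.**
There is an absolute constant `C > 0` such that: for every finite node set `V`, finite
collection of co-occurrence sets `c : ι → Finset V` with nonnegative weights `wc`, and every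
`ε ∈ (0,1)`, setting `F(ε) = ε^{-1/2}(1 + log₂(1 + log₂(1/ε)))`, there are an auxiliary set
`A = Fin m` with `m ≤ C·|ι|·F(ε)` and a nonnegative weight function on `(V ⊕ A) × (V ⊕ A)`
with at most `C·F(ε)·∑_c |c|` nonzero values whose augmented cut `(1+ε)`-approximates the
co-occurrence cut function `S ↦ ∑_c wc_c·|S ∩ c|·|c \ S|`. -/
theorem augmented_sparsifier_cooccurrence :
    ∃ C : ℝ, 0 < C ∧
      ∀ (V : Type) [Fintype V] [DecidableEq V]
        (ι : Type) [Fintype ι] (c : ι → Finset V) (wc : ι → ℝ),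
        (∀ i, 0 ≤ wc i) →
        ∀ ε : ℝ, 0 < ε → ε < 1 →
        ∃ (m : ℕ) (W : (V ⊕ Fin m) → (V ⊕ Fin m) → ℝ),
          (∀ u v, 0 ≤ W u v) ∧
          (m : ℝ) ≤ C * (Fintype.card ι : ℝ) *
              ((1 / Real.sqrt ε) * (1 + Real.logb 2 (1 + Real.logb 2 (1 / ε)))) ∧
          (({p : (V ⊕ Fin m) × (V ⊕ Fin m) | W p.1 p.2 ≠ 0}.ncard : ℝ)
            ≤ C * ((1 / Real.sqrt ε) * (1 + Real.logb 2 (1 + Real.logb 2 (1 / ε)))) *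
                (∑ i, ((c i).card : ℝ))) ∧
          ∀ S : Finset V,
            (∑ i, wc i * ((S ∩ c i).card : ℝ) * (((c i) \ S).card : ℝ))
              ≤ (⨅ T : Finset (Fin m), dirCut W (S.image Sum.inl ∪ T.image Sum.inr)) ∧
            (⨅ T : Finset (Fin m), dirCut W (S.image Sum.inl ∪ T.image Sum.inr))
              ≤ (1 + ε) * ∑ i, wc i * ((S ∩ c i).card : ℝ) * (((c i) \ S).card : ℝ) := by
  refine ⟨8, by norm_num, ?_⟩
  intro V _ _ ι _ c wc hwc ε he he1
  set L := Real.logb 2 (1 + Real.logb 2 (1 / ε)) with hL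
  have hl1 : 0 ≤ Real.logb 2 (1 / ε) := Real.logb_nonneg (by norm_num) (by
    rw [le_div_iff₀ he]; linarith)
  have hL0 : 0 ≤ L := Real.logb_nonneg (by norm_num) (by linarith)
  have hsq : 0 < Real.sqrt ε := Real.sqrt_pos.mpr he
  have hsq1 : Real.sqrt ε ≤ 1 := Real.sqrt_le_one.mpr he1.le
  have hR1 : 1 ≤ 1 / Real.sqrt ε := by rw [le_div_iff₀ hsq]; linarith
  set N := ⌈3 * (1 / Real.sqrt ε)⌉₊ with hNdef
  have hN1 : 3 * (1 / Real.sqrt ε) ≤ N := Nat.le_ceil _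
  have hN2 : (N:ℝ) ≤ 4 * (1 / Real.sqrt ε) := by
    have := Nat.ceil_lt_add_one (a := 3 * (1 / Real.sqrt ε)) (by positivity)
    linarith
  have hN : 9 / ε ≤ (N+1:ℝ)^2 := by
    have h : 9 / ε = (3 * (1 / Real.sqrt ε))^2 := by
      rw [mul_pow, div_pow, Real.sq_sqrt he.le]; ring
    rw [h]
    gcongr
    linarith
  set R := 1 / Real.sqrt ε with hR
  have hRL : R ≤ R * (1 + L) := by nlinarith
  let eqv : Fin (Fintype.card (ι × Fin N)) ≃ ι × Fin N := (Fintype.equivFin (ι × Fin N)).symm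
  let al : ι × Fin N → ℝ := fun p => (1+ε) * wc p.1 * ((c p.1).card : ℝ) *
    (tpt N (p.2+2) - tpt N p.2) * (1 - tpt N (p.2+1))
  let be : ι × Fin N → ℝ := fun p => (1+ε) * wc p.1 * ((c p.1).card : ℝ) *
    (tpt N (p.2+2) - tpt N p.2) * tpt N (p.2+1)
  have hal : ∀ p, 0 ≤ al p := by
    intro p
    have h1 : 0 ≤ tpt N (p.2+2) - tpt N p.2 := sub_nonneg.mpr (tpt_mono N (by omega))
    have h2 : 0 ≤ 1 - tpt N (p.2+1) := sub_nonneg.mpr (tpt_le_one N _)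
    have h3 := hwc p.1
    positivity
  have hbe : ∀ p, 0 ≤ be p := by
    intro p
    have h1 : 0 ≤ tpt N (p.2+2) - tpt N p.2 := sub_nonneg.mpr (tpt_mono N (by omega))
    have h2 := tpt_nonneg N (p.2+1)
    have h3 := hwc p.1
    positivity
  refine ⟨Fintype.card (ι × Fin N), gadW (fun e => c (eqv e).1) (fun e => al (eqv e))
    (fun e => be (eqv e)), ?_, ?_, ?_, ?_⟩
  · rintro (u | e) (v | f) <;> simp only [gadW, le_refl]
    · split_ifs
      · exact hal _
      · exact le_rfl
    · split_ifs
      · exact hbe _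
      · exact le_rfl
  · rw [Fintype.card_prod, Fintype.card_fin]
    push_cast
    have : (0:ℝ) ≤ Fintype.card ι := by positivity
    have : (N:ℝ) ≤ 8 * (R * (1+L)) := by linarith
    calc _ ≤ (Fintype.card ι : ℝ) * (8 * (R * (1+L))) := by gcongr
      _ = _ := by ring
  · have h := gad_ncard (fun e => c (eqv e).1) (fun e => al (eqv e)) (fun e => be (eqv e))
    have hs : ∑ e, (c (eqv e).1).card = N * ∑ i, (c i).card := by
      rw [Equiv.sum_comp eqv (fun p => (c p.1).card), Fintype.sum_prod_type]
      simp [Finset.mul_sum]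
    rw [hs] at h
    have h' : (({p : (V ⊕ Fin (Fintype.card (ι × Fin N))) × (V ⊕ Fin (Fintype.card (ι × Fin N))) |
      gadW (fun e => c (eqv e).1) (fun e => al (eqv e)) (fun e => be (eqv e)) p.1 p.2 ≠ 0}.ncard : ℕ) : ℝ)
        ≤ 2 * (N * ∑ i, ((c i).card : ℝ)) := by exact_mod_cast h
    refine h'.trans ?_
    have : (2:ℝ) * N ≤ 8 * (R * (1+L)) := by linarith
    rw [← mul_assoc]
    exact mul_le_mul_of_nonneg_right this (Finset.sum_nonneg fun i _ => Nat.cast_nonneg _)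
  · intro S
    rw [gad_iInf]
    rw [Equiv.sum_comp eqv (fun p => min (((S ∩ c p.1).card : ℝ) * al p)
      (((c p.1 \ S).card : ℝ) * be p)), Fintype.sum_prod_type]
    have hc : ∀ i, ((S ∩ c i).card : ℝ) + ((c i \ S).card : ℝ) = (c i).card := by
      intro i
      have := Finset.card_sdiff_add_card_inter (c i) S
      rw [Finset.inter_comm] at this
      rw [add_comm]
      exact_mod_cast this
    have key := fun i => one_set N ε he he1 hN (wc i) ((S ∩ c i).card) ((c i \ S).card) _ (hwc i)
      (Nat.cast_nonneg _) (Nat.cast_nonneg _) (hc i)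
    constructor
    · exact Finset.sum_le_sum fun i _ => (key i).1
    · rw [Finset.mul_sum]
      exact Finset.sum_le_sum fun i _ => (key i).2
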